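/- Three-dimensional early-time piece estimate: fix 2 < r < 6. For any t > 0, any A > 0, any measurable interval I ⊆ [0, min(t/2, A)], and any measurable u : I × ℝ³ → ℂ, one has ‖ ∫_I e^{i(t−s)Δ} (|u|^{4/3}u)(s) ds ‖_{L^r_x(ℝ³)} ≤ C t^{−3(1/2−1/r)} A^{3(r−2)/(4r)} ‖u‖^{7/3}_{L^{28r/(3(r+6))}_s L^{7r/(3(r−1))}_x(I×ℝ³)}, with C depending only on r. -/

import Mathlib

open MeasureTheory Set
open scoped ENNReal Real

noncomputable section

/-- The free Schrödinger propagator `e^{itΔ}` acting on functions on a `d`-dimensional space: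
for `t ≠ 0`, `(e^{itΔ}f)(x) = (4πit)^{-d/2} ∫ e^{i|x-y|²/(4t)} f(y) dy`, and `e^{i0Δ}f = f`. -/
def schrod {E : Type*} [NormedAddCommGroup E] [MeasureSpace E] (d : ℕ) (t : ℝ) (f : E → ℂ) :
    E → ℂ :=
  if t = 0 then f
  else fun x =>
    (4 * (Real.pi : ℂ) * Complex.I * (t : ℂ)) ^ (-(d : ℂ) / 2) *
      ∫ y, Complex.exp (Complex.I * ((‖x - y‖ ^ 2 : ℝ) : ℂ) / (4 * (t : ℂ))) * f y

/-- Mixed Lebesgue norm `‖u‖_{L^p_t L^q_x (I × space)}`. -/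
def mixedNorm {α : Type*} [MeasurableSpace α] (ν : Measure α) (I : Set ℝ) (p q : ℝ≥0∞)
    (u : ℝ → α → ℂ) : ℝ≥0∞ :=
  if p = ∞ then essSup (fun t => eLpNorm (u t) q ν) (volume.restrict I)
  else (∫⁻ t in I, eLpNorm (u t) q ν ^ p.toReal) ^ (1 / p.toReal)

/-- Lorentz quasinorm `p^{1/q} ‖ λ · ν({g > λ})^{1/p} ‖_{L^q((0,∞), dλ/λ)}`
for an `ℝ≥0∞`-valued function `g`. -/
def lorentzNorm {α : Type*} [MeasurableSpace α] (ν : Measure α) (p q : ℝ≥0∞)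
    (g : α → ℝ≥0∞) : ℝ≥0∞ :=
  if q = ∞ then
    ⨆ l ∈ Set.Ioi (0 : ℝ), ENNReal.ofReal l * ν {x | ENNReal.ofReal l < g x} ^ p⁻¹.toReal
  else
    (p * ∫⁻ l in Set.Ioi (0 : ℝ),
        (ENNReal.ofReal l * ν {x | ENNReal.ofReal l < g x} ^ p⁻¹.toReal) ^ q.toReal /
          ENNReal.ofReal l) ^ q⁻¹.toReal

/-- Lorentz quasinorm `‖f‖_{L^{p,q}}` of a scalar function. -/
def lorentzNormC {α : Type*} [MeasurableSpace α] (ν : Measure α) (p q : ℝ≥0∞)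
    (f : α → ℂ) : ℝ≥0∞ :=
  lorentzNorm ν p q fun x => (‖f x‖₊ : ℝ≥0∞)

/-- Lorentz-in-time mixed norm `‖u‖_{L^{p,q}_t L^r_x (I × space)}`. -/
def lorentzMixedNorm {α : Type*} [MeasurableSpace α] (ν : Measure α) (I : Set ℝ)
    (p q r : ℝ≥0∞) (u : ℝ → α → ℂ) : ℝ≥0∞ :=
  lorentzNorm (volume.restrict I) p q fun t => eLpNorm (u t) r ν

/-- The nonlinearity `|f|^a f`. -/
def nonlin {E : Type*} (a : ℝ) (f : E → ℂ) : E → ℂ := fun x => ((‖f x‖ ^ a : ℝ) : ℂ) * f x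

/-! On `I` one has `|t - s| ≥ t / 2`. Expanding `|x - y|²` exhibits `e^{iτΔ} f` as a rescaled
Fourier transform of `f` times a quadratic phase, so the Hausdorff–Young inequality gives the
dispersive estimate `L^{r'} → L^r` with the decay `|τ|^{-d(1/2 - 1/r)}`. Minkowski's inequality
therefore bounds the Duhamel integral by `t^{-d(1/2 - 1/r)}` times the `L¹_s L^{r'}_x` norm of the
nonlinearity, and Hölder's inequality in time, on a set of measure at most `A`, produces the power
of `A`.

The Hausdorff–Young inequality is obtained by Marcinkiewicz interpolation between the trivial
bound `L¹ → L^∞` and Plancherel's theorem: at each level `l` the function is truncated at a height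
such that the part above it has `L¹` norm at most `l / 2`. The transform of that part stays below
`l / 2`, so the level set is controlled by the `L²` bound for the remaining part.
-/

section Interpolation

variable {α β F G : Type*} [MeasurableSpace α] [MeasurableSpace β] [NormedAddCommGroup F]
  [NormedAddCommGroup G] {μ : Measure α} {ν : Measure β}

/-- Subadditive operators that are contractions `L¹ → L^∞` and `L² → L²`, the endpoint hypotheses
of Marcinkiewicz interpolation. Only integrable functions are tested, because the Fourier
integral is meaningful on these. -/
structure IsEndpointContraction (T : (α → F) → β → G) (μ : Measure α) (ν : Measure β) : Prop where
  aestronglyMeasurable : ∀ f, Integrable f μ → AEStronglyMeasurable (T f) ν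
  enorm_add_le : ∀ f g, Integrable f μ → Integrable g μ →
    ∀ᵐ x ∂ν, ‖T (f + g) x‖ₑ ≤ ‖T f x‖ₑ + ‖T g x‖ₑ
  eLpNorm_top_le : ∀ f, Integrable f μ → eLpNorm (T f) ∞ ν ≤ eLpNorm f 1 μ
  eLpNorm_two_le : ∀ f, Integrable f μ → eLpNorm (T f) 2 ν ≤ eLpNorm f 2 μ

theorem setLIntegral_lt_mul_rpow_le {g : α → ℝ≥0∞} (hg : Measurable g) {q : ℝ} (hq : 1 ≤ q)
    (l : ℝ≥0∞) {M : ℝ≥0∞} (hM : M ≠ 0) (hM' : M ≠ ∞) :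
    ∫⁻ y in {y | M < l * g y ^ (q - 1)}, g y ∂μ ≤ l / M * ∫⁻ y, g y ^ q ∂μ := by
  have pointwise : ∀ y, M < l * g y ^ (q - 1) → g y ≤ l / M * g y ^ q := fun y hy ↦ by
    rw [← ENNReal.mul_div_right_comm, ENNReal.le_div_iff_mul_le (.inl hM) (.inl hM')]
    calc g y * M ≤ g y * (l * g y ^ (q - 1)) := by gcongr
      _ = l * (g y ^ (q - 1) * g y ^ (1 : ℝ)) := by rw [ENNReal.rpow_one]; ring
      _ = l * g y ^ q := by
        rw [← ENNReal.rpow_add_of_nonneg _ _ (by linarith) zero_le_one, sub_add_cancel]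
  calc ∫⁻ y in {y | M < l * g y ^ (q - 1)}, g y ∂μ
      ≤ ∫⁻ y in {y | M < l * g y ^ (q - 1)}, l / M * g y ^ q ∂μ :=
        setLIntegral_mono (by fun_prop) pointwise
    _ ≤ ∫⁻ y, l / M * g y ^ q ∂μ := setLIntegral_le_lintegral _ _
    _ = l / M * ∫⁻ y, g y ^ q ∂μ := lintegral_const_mul _ (by fun_prop)

theorem setLIntegral_Ioc_rpow_sub_one {s : ℝ} (hs : 0 < s) {b : ℝ} (hb : 0 ≤ b) :
    ∫⁻ l in Ioc 0 b, ENNReal.ofReal (l ^ (s - 1)) = ENNReal.ofReal (b ^ s / s) := by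
  have integrable : IntegrableOn (fun l : ℝ ↦ l ^ (s - 1)) (Ioc 0 b) :=
    (intervalIntegrable_iff_integrableOn_Ioc_of_le hb).1
      (intervalIntegral.intervalIntegrable_rpow' (by linarith))
  have nonneg : ∀ᵐ l ∂volume.restrict (Ioc 0 b), 0 ≤ l ^ (s - 1) :=
    (ae_restrict_mem measurableSet_Ioc).mono fun l hl ↦ Real.rpow_nonneg hl.1.le _
  rw [← ofReal_integral_eq_lintegral_ofReal integrable nonneg,
    ← intervalIntegral.integral_of_le hb, integral_rpow (.inl (by linarith)), sub_add_cancel,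
    Real.zero_rpow hs.ne', sub_zero]

theorem setLIntegral_mul_le_rpow_sub_one {s : ℝ} (hs : 0 < s) {c M : ℝ≥0∞} (hc : c ≠ 0)
    (hM : M ≠ ∞) :
    ∫⁻ l in Ioi (0 : ℝ) ∩ {l | ENNReal.ofReal l * c ≤ M}, ENNReal.ofReal (l ^ (s - 1)) =
      (M / c) ^ s / ENNReal.ofReal s := by
  have hMc : M / c ≠ ∞ := ENNReal.div_ne_top hM hc
  have set_eq : Ioi (0 : ℝ) ∩ {l | ENNReal.ofReal l * c ≤ M} = Ioc 0 (M / c).toReal := by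
    ext l
    simp only [mem_inter_iff, mem_Ioi, mem_ofPred_eq, mem_Ioc,
      ← ENNReal.le_div_iff_mul_le (.inl hc) (.inr hM), ENNReal.ofReal_le_iff_le_toReal hMc]
  rw [set_eq, setLIntegral_Ioc_rpow_sub_one hs ENNReal.toReal_nonneg, ENNReal.ofReal_div_of_pos hs,
    ← ENNReal.ofReal_rpow_of_nonneg ENNReal.toReal_nonneg hs.le, ENNReal.ofReal_toReal hMc]

theorem sq_mul_div_rpow_rpow {r q : ℝ} (hrq : r.HolderConjugate q) (hr : 2 < r) {a M : ℝ≥0∞}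
    (ha : a ≠ 0) (ha' : a ≠ ∞) :
    a ^ 2 * (M / a ^ (q - 1)) ^ (r - 2) = M ^ (r - 2) * a ^ q := by
  have exponent : (2 : ℝ) + -((q - 1) * (r - 2)) = q := by
    linarith [hrq.symm.sub_one_mul_conj]
  rw [div_eq_mul_inv, ENNReal.mul_rpow_of_nonneg _ _ (by linarith), ← ENNReal.rpow_neg,
    ← ENNReal.rpow_mul, neg_mul, mul_left_comm, ← ENNReal.rpow_two, ← ENNReal.rpow_add _ _ ha ha',
    exponent]

theorem setLIntegral_rpow_sub_three_mul_sq {r q : ℝ} (hrq : r.HolderConjugate q) (hr : 2 < r)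
    {a M : ℝ≥0∞} (ha : a ≠ ∞) (hM : M ≠ ∞) :
    ∫⁻ l in Ioi (0 : ℝ) ∩ {l | ENNReal.ofReal l * a ^ (q - 1) ≤ M},
        ENNReal.ofReal (l ^ (r - 3)) * a ^ 2 =
      M ^ (r - 2) / ENNReal.ofReal (r - 2) * a ^ q := by
  obtain rfl | ha_zero := eq_or_ne a 0
  · simp [hrq.symm.pos]
  have hc : a ^ (q - 1) ≠ 0 := by simp [ha_zero, ha]
  rw [lintegral_mul_const _ (by fun_prop), show r - 3 = r - 2 - 1 by ring,
    setLIntegral_mul_le_rpow_sub_one (by linarith) hc hM]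
  simp only [div_eq_mul_inv, mul_right_comm _ (ENNReal.ofReal (r - 2))⁻¹]
  rw [← sq_mul_div_rpow_rpow hrq hr ha_zero ha, div_eq_mul_inv, mul_comm (a ^ 2)]

theorem lintegral_rpow_mul_setLIntegral_sq [SFinite μ] {r q : ℝ} (hrq : r.HolderConjugate q)
    (hr : 2 < r) {g : α → ℝ≥0∞} (hg : Measurable g) (hg' : ∀ y, g y ≠ ∞) {M : ℝ≥0∞}
    (hM : M ≠ ∞) :
    ∫⁻ l in Ioi (0 : ℝ), ENNReal.ofReal (l ^ (r - 3)) *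
        ∫⁻ y in {y | ENNReal.ofReal l * g y ^ (q - 1) ≤ M}, g y ^ 2 ∂μ =
      M ^ (r - 2) / ENNReal.ofReal (r - 2) * ∫⁻ y, g y ^ q ∂μ := by
  let D : Set (ℝ × α) := {z | ENNReal.ofReal z.1 * g z.2 ^ (q - 1) ≤ M}
  have hD : MeasurableSet D := measurableSet_le (by fun_prop) (by fun_prop)
  have hDl (l : ℝ) : MeasurableSet {y | ENNReal.ofReal l * g y ^ (q - 1) ≤ M} :=
    measurable_prodMk_left hD
  have hDy (y : α) : MeasurableSet {l | ENNReal.ofReal l * g y ^ (q - 1) ≤ M} :=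
    measurable_prodMk_right hD
  let H : ℝ × α → ℝ≥0∞ := D.indicator fun z ↦ ENNReal.ofReal (z.1 ^ (r - 3)) * g z.2 ^ 2
  have hH : Measurable H := Measurable.indicator (by fun_prop) hD
  have slice_left (l : ℝ) : ENNReal.ofReal (l ^ (r - 3)) *
      ∫⁻ y in {y | ENNReal.ofReal l * g y ^ (q - 1) ≤ M}, g y ^ 2 ∂μ = ∫⁻ y, H (l, y) ∂μ := by
    rw [← lintegral_const_mul _ (by fun_prop), ← lintegral_indicator (hDl l)]
    rfl
  have slice_right (y : α) : ∫⁻ l in Ioi (0 : ℝ), H (l, y) =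
      M ^ (r - 2) / ENNReal.ofReal (r - 2) * g y ^ q := by
    rw [← setLIntegral_rpow_sub_three_mul_sq hrq hr (hg' y) hM, inter_comm,
      ← Measure.restrict_restrict (hDy y), ← lintegral_indicator (hDy y)]
    rfl
  calc ∫⁻ l in Ioi (0 : ℝ), ENNReal.ofReal (l ^ (r - 3)) *
        ∫⁻ y in {y | ENNReal.ofReal l * g y ^ (q - 1) ≤ M}, g y ^ 2 ∂μ
      = ∫⁻ l in Ioi (0 : ℝ), ∫⁻ y, H (l, y) ∂μ := by simp_rw [slice_left]
    _ = ∫⁻ y, (∫⁻ l in Ioi (0 : ℝ), H (l, y)) ∂μ := lintegral_lintegral_swap hH.aemeasurable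
    _ = ∫⁻ y, M ^ (r - 2) / ENNReal.ofReal (r - 2) * g y ^ q ∂μ := by simp_rw [slice_right]
    _ = _ := lintegral_const_mul _ (by fun_prop)

theorem lintegral_enorm_rpow_eq_lintegral_meas_lt_mul {h : β → G} (hh : AEStronglyMeasurable h ν)
    {r : ℝ} (hr : 0 < r) :
    ∫⁻ x, ‖h x‖ₑ ^ r ∂ν = ENNReal.ofReal r *
      ∫⁻ l in Ioi (0 : ℝ), ν {x | ENNReal.ofReal l < ‖h x‖ₑ} * ENNReal.ofReal (l ^ (r - 1)) := by
  have level_eq : ∀ l ∈ Ioi (0 : ℝ), ν {x | l < ‖h x‖} * ENNReal.ofReal (l ^ (r - 1)) =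
      ν {x | ENNReal.ofReal l < ‖h x‖ₑ} * ENNReal.ofReal (l ^ (r - 1)) := fun l hl ↦ by
    simp_rw [← ofReal_norm, ENNReal.ofReal_lt_ofReal_iff_of_nonneg (le_of_lt hl)]
  rw [← setLIntegral_congr_fun measurableSet_Ioi level_eq,
    ← lintegral_rpow_eq_lintegral_meas_lt_mul ν (.of_forall fun x ↦ norm_nonneg _)
      hh.norm.aemeasurable hr]
  simp_rw [← ofReal_norm, ENNReal.ofReal_rpow_of_nonneg (norm_nonneg _) hr.le]

namespace IsEndpointContraction

variable {T : (α → F) → β → G}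

theorem enorm_le_of_ae_eq (hT : IsEndpointContraction T μ ν) {f g : α → F} (hf : Integrable f μ)
    (hg : Integrable g μ) (hfg : f =ᵐ[μ] g) : ∀ᵐ x ∂ν, ‖T f x‖ₑ ≤ ‖T g x‖ₑ := by
  have diff_zero : eLpNorm (T (f - g)) ∞ ν = 0 := by
    refine le_antisymm ((hT.eLpNorm_top_le _ (hf.sub hg)).trans_eq ?_) zero_le
    rw [eLpNorm_congr_ae (g := 0) (hfg.mono fun x hx ↦ by simp [hx]), eLpNorm_zero]
  filter_upwards [hT.enorm_add_le g (f - g) hg (hf.sub hg),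
    enorm_ae_le_eLpNormEssSup (T (f - g)) ν] with x h_add h_diff
  rw [← eLpNorm_exponent_top, diff_zero, nonpos_iff_eq_zero] at h_diff
  simpa [h_diff] using h_add

theorem measure_lt_enorm_le (hT : IsEndpointContraction T μ ν) {f : α → F} (hf : Integrable f μ)
    {S : Set α} (hS : MeasurableSet S) {l : ℝ≥0∞} (hl : l ≠ 0)
    (h_compl : ∫⁻ y in Sᶜ, ‖f y‖ₑ ∂μ ≤ l / 2) :
    ν {x | l < ‖T f x‖ₑ} ≤ (l / 2)⁻¹ ^ 2 * ∫⁻ y in S, ‖f y‖ₑ ^ 2 ∂μ := by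
  have hfS := hf.indicator hS
  have hfSc := hf.indicator hS.compl
  have compl_le : ∀ᵐ x ∂ν, ‖T (Sᶜ.indicator f) x‖ₑ ≤ l / 2 := by
    filter_upwards [enorm_ae_le_eLpNormEssSup (T (Sᶜ.indicator f)) ν] with x hx
    refine (hx.trans (hT.eLpNorm_top_le _ hfSc)).trans ?_
    simp_rw [eLpNorm_one_eq_lintegral_enorm, enorm_indicator_eq_indicator_enorm]
    rwa [lintegral_indicator hS.compl]
  have level_subset : ∀ᵐ x ∂ν, l < ‖T f x‖ₑ → l / 2 ≤ ‖T (S.indicator f) x‖ₑ := by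
    filter_upwards [compl_le, hT.enorm_add_le _ _ hfS hfSc] with x h_compl h_add hx
    rw [indicator_self_add_compl] at h_add
    by_contra! h_lt
    have := (hx.trans_le h_add).trans_le (add_le_add h_lt.le h_compl)
    simp at this
  calc ν {x | l < ‖T f x‖ₑ}
      ≤ ν {x | l / 2 ≤ ‖T (S.indicator f) x‖ₑ} := measure_mono_ae level_subset
    _ ≤ (l / 2)⁻¹ ^ (2 : ℝ≥0∞).toReal * eLpNorm (T (S.indicator f)) 2 ν ^ (2 : ℝ≥0∞).toReal :=
        meas_ge_le_mul_pow_eLpNorm_enorm ν two_ne_zero ENNReal.ofNat_ne_top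
          (hT.aestronglyMeasurable _ hfS) (by simpa using hl) (by simp)
    _ ≤ (l / 2)⁻¹ ^ (2 : ℝ≥0∞).toReal * eLpNorm (S.indicator f) 2 μ ^ (2 : ℝ≥0∞).toReal := by
        gcongr
        exact hT.eLpNorm_two_le _ hfS
    _ = (l / 2)⁻¹ ^ 2 * ∫⁻ y in S, ‖f y‖ₑ ^ 2 ∂μ := by
        rw [eLpNorm_indicator_eq_eLpNorm_restrict hS,
          eLpNorm_eq_lintegral_rpow_enorm_toReal two_ne_zero ENNReal.ofNat_ne_top,
          ENNReal.toReal_ofNat, ← ENNReal.rpow_mul, one_div_mul_cancel two_ne_zero,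
          ENNReal.rpow_one]
        simp only [ENNReal.rpow_two]

theorem ae_eq_zero (hT : IsEndpointContraction T μ ν) {f : α → F} (hf : Integrable f μ)
    (hf0 : f =ᵐ[μ] 0) : T f =ᵐ[ν] 0 := by
  rw [← eLpNorm_eq_zero_iff (hT.aestronglyMeasurable f hf) ENNReal.top_ne_zero]
  refine le_antisymm ((hT.eLpNorm_top_le f hf).trans_eq ?_) zero_le
  rw [eLpNorm_congr_ae hf0, eLpNorm_zero]

theorem measure_lt_enorm_mul_rpow_le (hT : IsEndpointContraction T μ ν) {r q : ℝ}
    (hrq : r.HolderConjugate q) {f : α → F} (hf : Integrable f μ) (hfm : StronglyMeasurable f)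
    (h_zero : ∫⁻ y, ‖f y‖ₑ ^ q ∂μ ≠ 0) (h_top : ∫⁻ y, ‖f y‖ₑ ^ q ∂μ ≠ ∞) {l : ℝ} (hl : 0 < l) :
    ν {x | ENNReal.ofReal l < ‖T f x‖ₑ} * ENNReal.ofReal (l ^ (r - 1)) ≤
      4 * (ENNReal.ofReal (l ^ (r - 3)) *
        ∫⁻ y in {y | ENNReal.ofReal l * ‖f y‖ₑ ^ (q - 1) ≤ 2 * ∫⁻ y, ‖f y‖ₑ ^ q ∂μ},
          ‖f y‖ₑ ^ 2 ∂μ) := by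
  set m := ∫⁻ y, ‖f y‖ₑ ^ q ∂μ
  have hfe : Measurable fun y ↦ ‖f y‖ₑ := hfm.enorm
  -- `S` truncates `f` at the height where the remainder has `L¹` norm at most `l / 2`.
  let S : Set α := {y | ENNReal.ofReal l * ‖f y‖ₑ ^ (q - 1) ≤ 2 * m}
  have hS : MeasurableSet S := measurableSet_le (by fun_prop) (by fun_prop)
  have h_compl : ∫⁻ y in Sᶜ, ‖f y‖ₑ ∂μ ≤ ENNReal.ofReal l / 2 := calc
    _ = ∫⁻ y in {y | 2 * m < ENNReal.ofReal l * ‖f y‖ₑ ^ (q - 1)}, ‖f y‖ₑ ∂μ := by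
        simp only [S, compl_ofPred, not_le]
    _ ≤ ENNReal.ofReal l / (2 * m) * m := setLIntegral_lt_mul_rpow_le hfe hrq.symm.lt.le _
        (mul_ne_zero two_ne_zero h_zero) (ENNReal.mul_ne_top ENNReal.ofNat_ne_top h_top)
    _ = ENNReal.ofReal l / 2 := by
        rw [div_eq_mul_inv, ENNReal.mul_inv (.inl two_ne_zero) (.inl ENNReal.ofNat_ne_top),
          mul_assoc, mul_assoc, ENNReal.inv_mul_cancel h_zero h_top, mul_one, div_eq_mul_inv]
  have weight : (ENNReal.ofReal l / 2)⁻¹ ^ 2 * ENNReal.ofReal (l ^ (r - 1)) =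
      4 * ENNReal.ofReal (l ^ (r - 3)) := by
    rw [← ENNReal.ofReal_ofNat 2, ← ENNReal.ofReal_div_of_pos two_pos,
      ← ENNReal.ofReal_inv_of_pos (by positivity), ← ENNReal.ofReal_pow (by positivity),
      ← ENNReal.ofReal_mul (by positivity), ← ENNReal.ofReal_ofNat 4,
      ← ENNReal.ofReal_mul (by positivity), show r - 1 = r - 3 + 2 by ring, Real.rpow_add hl,
      Real.rpow_two]
    congr 1
    field
  calc ν {x | ENNReal.ofReal l < ‖T f x‖ₑ} * ENNReal.ofReal (l ^ (r - 1))
      ≤ (ENNReal.ofReal l / 2)⁻¹ ^ 2 * (∫⁻ y in S, ‖f y‖ₑ ^ 2 ∂μ) *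
          ENNReal.ofReal (l ^ (r - 1)) := by
        gcongr
        exact hT.measure_lt_enorm_le hf hS (by simpa using hl) h_compl
    _ = _ := by rw [mul_right_comm, weight, mul_assoc]

theorem lintegral_enorm_rpow_le [SFinite μ] (hT : IsEndpointContraction T μ ν) {r q : ℝ}
    (hrq : r.HolderConjugate q) (hr : 2 < r) {f : α → F} (hf : Integrable f μ)
    (hfm : StronglyMeasurable f) :
    ∫⁻ x, ‖T f x‖ₑ ^ r ∂ν ≤
      ENNReal.ofReal (4 * r * 2 ^ (r - 2) / (r - 2)) * (∫⁻ y, ‖f y‖ₑ ^ q ∂μ) ^ (r - 1) := by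
  set m := ∫⁻ y, ‖f y‖ₑ ^ q ∂μ with hm
  have hs : 0 < r - 2 := by linarith
  have hfe : Measurable fun y ↦ ‖f y‖ₑ := hfm.enorm
  obtain h_zero | h_zero := eq_or_ne m 0
  · have hf0 : f =ᵐ[μ] 0 := by
      rw [hm, lintegral_eq_zero_iff (by fun_prop)] at h_zero
      filter_upwards [h_zero] with y hy
      simpa [hrq.symm.pos, hrq.symm.pos.not_gt] using hy
    rw [lintegral_congr_ae (g := 0) ((hT.ae_eq_zero hf hf0).mono fun x hx ↦ by simp [hx, hrq.pos])]
    simp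
  obtain h_top | h_top := eq_or_ne m ∞
  · have : 0 < 4 * r * 2 ^ (r - 2) / (r - 2) := by have := hrq.pos; positivity
    simp [h_top, ENNReal.top_rpow_of_pos hrq.sub_one_pos, ENNReal.mul_top, this]
  calc ∫⁻ x, ‖T f x‖ₑ ^ r ∂ν
      = ENNReal.ofReal r * ∫⁻ l in Ioi (0 : ℝ),
          ν {x | ENNReal.ofReal l < ‖T f x‖ₑ} * ENNReal.ofReal (l ^ (r - 1)) :=
        lintegral_enorm_rpow_eq_lintegral_meas_lt_mul (hT.aestronglyMeasurable f hf) hrq.pos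
    _ ≤ ENNReal.ofReal r * ∫⁻ l in Ioi (0 : ℝ), 4 * (ENNReal.ofReal (l ^ (r - 3)) *
          ∫⁻ y in {y | ENNReal.ofReal l * ‖f y‖ₑ ^ (q - 1) ≤ 2 * m}, ‖f y‖ₑ ^ 2 ∂μ) := by
        refine mul_le_mul_right ?_ _
        exact setLIntegral_mono' measurableSet_Ioi fun l hl ↦
          hT.measure_lt_enorm_mul_rpow_le hrq hf hfm h_zero h_top (mem_Ioi.1 hl)
    _ = ENNReal.ofReal r * (4 * ((2 * m) ^ (r - 2) / ENNReal.ofReal (r - 2) * m)) := by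
        rw [lintegral_const_mul' _ _ ENNReal.ofNat_ne_top, lintegral_rpow_mul_setLIntegral_sq hrq hr
          hfe (fun y ↦ enorm_ne_top) (ENNReal.mul_ne_top ENNReal.ofNat_ne_top h_top)]
    _ = ENNReal.ofReal (4 * r * 2 ^ (r - 2) / (r - 2)) * m ^ (r - 1) := by
        have := hrq.pos
        rw [ENNReal.mul_rpow_of_nonneg _ _ hs.le, show r - 1 = r - 2 + 1 by ring,
          ENNReal.rpow_add _ _ h_zero h_top, ENNReal.rpow_one, ENNReal.ofReal_div_of_pos hs,
          ENNReal.ofReal_mul (by positivity), ENNReal.ofReal_mul (by positivity),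
          ← ENNReal.ofReal_rpow_of_pos two_pos, ENNReal.ofReal_ofNat, ENNReal.ofReal_ofNat]
        simp only [div_eq_mul_inv]
        ring

theorem exists_eLpNorm_le [SFinite μ] (hT : IsEndpointContraction T μ ν) {r q : ℝ≥0∞}
    [r.HolderConjugate q] (hr : 2 ≤ r) :
    ∃ C : ℝ, 0 < C ∧
      ∀ f, Integrable f μ → eLpNorm (T f) r ν ≤ ENNReal.ofReal C * eLpNorm f q μ := by
  obtain rfl | hr_two := eq_or_ne r 2
  · obtain rfl : q = 2 := ENNReal.HolderConjugate.unique 2 q 2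
    exact ⟨1, one_pos, fun f hf ↦ by simpa using hT.eLpNorm_two_le f hf⟩
  obtain rfl | hr_top := eq_or_ne r ∞
  · obtain rfl : q = 1 := ENNReal.HolderConjugate.unique ∞ q 1
    exact ⟨1, one_pos, fun f hf ↦ by simpa using hT.eLpNorm_top_le f hf⟩
  have hr_gt : 2 < r.toReal := by
    have := (ENNReal.toReal_lt_toReal ENNReal.ofNat_ne_top hr_top).2 (hr.lt_of_ne' hr_two)
    rwa [ENNReal.toReal_ofNat] at this
  have hrq' : r.toReal.HolderConjugate q.toReal := ENNReal.HolderConjugate.toReal (by linarith)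
  have hr_pos := hrq'.pos
  set K := 4 * r.toReal * 2 ^ (r.toReal - 2) / (r.toReal - 2)
  have hK : 0 < K := div_pos (by positivity) (sub_pos.2 hr_gt)
  refine ⟨K ^ (1 / r.toReal), Real.rpow_pos_of_pos hK _, fun f hf ↦ ?_⟩
  have hfm := hf.1.stronglyMeasurable_mk
  have hf_mk := hf.congr hf.1.ae_eq_mk
  obtain ⟨hq_zero, hq_top⟩ : q ≠ 0 ∧ q ≠ ∞ := by
    simpa [ENNReal.toReal_pos_iff, pos_iff_ne_zero, lt_top_iff_ne_top] using hrq'.symm.pos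
  calc eLpNorm (T f) r ν ≤ eLpNorm (T (hf.1.mk f)) r ν :=
        eLpNorm_mono_enorm_ae (hT.enorm_le_of_ae_eq hf hf_mk hf.1.ae_eq_mk)
    _ = (∫⁻ x, ‖T (hf.1.mk f) x‖ₑ ^ r.toReal ∂ν) ^ (1 / r.toReal) :=
        eLpNorm_eq_lintegral_rpow_enorm_toReal (by positivity) hr_top
    _ ≤ (ENNReal.ofReal K * (∫⁻ y, ‖hf.1.mk f y‖ₑ ^ q.toReal ∂μ) ^ (r.toReal - 1)) ^
          (1 / r.toReal) := by
        gcongr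
        exact hT.lintegral_enorm_rpow_le hrq' hr_gt hf_mk hfm
    _ = ENNReal.ofReal (K ^ (1 / r.toReal)) * eLpNorm (hf.1.mk f) q μ := by
        rw [ENNReal.mul_rpow_of_nonneg _ _ (by positivity),
          ENNReal.ofReal_rpow_of_pos (by positivity), ← ENNReal.rpow_mul,
          eLpNorm_eq_lintegral_rpow_enorm_toReal hq_zero hq_top]
        congr 2
        rw [mul_one_div, sub_div, div_self hr_pos.ne', one_div, hrq'.one_sub_inv, one_div]
    _ = ENNReal.ofReal (K ^ (1 / r.toReal)) * eLpNorm f q μ := by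
        rw [eLpNorm_congr_ae hf.1.ae_eq_mk.symm]

end IsEndpointContraction

end Interpolation

section Fourier

open scoped FourierTransform SchwartzMap

variable {E F : Type*} [NormedAddCommGroup E] [InnerProductSpace ℝ E] [FiniteDimensional ℝ E]
  [MeasurableSpace E] [BorelSpace E] [NormedAddCommGroup F] [InnerProductSpace ℂ F]

theorem continuous_fourier {f : E → F} (hf : Integrable f) : Continuous (𝓕 f) :=
  VectorFourier.fourierIntegral_continuous (L := innerₗ E) Real.continuous_fourierChar
    continuous_inner hf

theorem norm_fourier_le (f : E → F) (ξ : E) : ‖𝓕 f ξ‖ ≤ ∫ x, ‖f x‖ :=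
  VectorFourier.norm_fourierIntegral_le_integral_norm _ _ (innerₗ E) f ξ

theorem fourier_add_of_integrable {f g : E → F} (hf : Integrable f) (hg : Integrable g) :
    𝓕 (f + g) = 𝓕 f + 𝓕 g :=
  VectorFourier.fourierIntegral_add (L := innerₗ E) Real.continuous_fourierChar continuous_inner
    hf hg

variable [CompleteSpace F]

theorem integral_fourier_smul_eq (ψ : 𝓢(E, ℂ)) {f : E → F} (hf : Integrable f) :
    ∫ ξ, (𝓕 ψ) ξ • f ξ = ∫ x, ψ x • 𝓕 f x := by
  have := VectorFourier.integral_fourierIntegral_smul_eq_flip (L := innerₗ E)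
    Real.continuous_fourierChar continuous_inner (ψ.integrable (μ := volume)) hf
  rwa [flip_innerₗ] at this

theorem fourier_ae_eq_fourier_toLp {f : E → F} (hf : Integrable f) (hf2 : MemLp f 2) :
    𝓕 f =ᵐ[volume] (𝓕 (hf2.toLp f) : Lp F 2 (volume : Measure E)) := by
  refine ae_eq_of_integral_contDiff_smul_eq (continuous_fourier hf).locallyIntegrable
    ((Lp.memLp _).locallyIntegrable one_le_two) fun φ hφ hφc ↦ ?_
  have hψc : HasCompactSupport fun x ↦ (φ x : ℂ) :=
    hφc.comp_left (g := fun x : ℝ ↦ (x : ℂ)) Complex.ofReal_zero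
  let ψ : 𝓢(E, ℂ) := hψc.toSchwartzMap (Complex.ofRealCLM.contDiff.comp hφ)
  have real_smul (x : E) (v : F) : φ x • v = ψ x • v := (Complex.coe_smul (φ x) v).symm
  calc ∫ x, φ x • 𝓕 f x = ∫ x, (𝓕 ψ) x • f x := by
        simp_rw [real_smul, integral_fourier_smul_eq ψ hf]
    _ = ∫ x, (𝓕 ψ) x • hf2.toLp f x :=
        integral_congr_ae (hf2.coeFn_toLp.mono fun x hx ↦ by simp only [hx])
    _ = ∫ x, ψ x • (𝓕 (hf2.toLp f) : Lp F 2 (volume : Measure E)) x := by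
        rw [← Lp.toTemperedDistribution_apply, ← Lp.toTemperedDistribution_apply,
          ← Lp.fourier_toTemperedDistribution_eq]
        rfl
    _ = ∫ x, φ x • (𝓕 (hf2.toLp f) : Lp F 2 (volume : Measure E)) x := by simp_rw [real_smul]

theorem eLpNorm_fourier_two {f : E → F} (hf : Integrable f) (hf2 : MemLp f 2) :
    eLpNorm (𝓕 f) 2 = eLpNorm f 2 := by
  have plancherel := Lp.norm_fourier_eq (hf2.toLp f)
  rw [eLpNorm_congr_ae (fourier_ae_eq_fourier_toLp hf hf2), ← Lp.enorm_def, ← ofReal_norm,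
    plancherel, ofReal_norm, Lp.enorm_toLp]

theorem isEndpointContraction_fourier :
    IsEndpointContraction (𝓕 : (E → F) → E → F) volume volume where
  aestronglyMeasurable _ hf := (continuous_fourier hf).aestronglyMeasurable
  enorm_add_le f g hf hg := .of_forall fun x ↦ by
    rw [fourier_add_of_integrable hf hg]
    exact enorm_add_le _ _
  eLpNorm_top_le f hf := by
    rw [eLpNorm_exponent_top, eLpNorm_one_eq_lintegral_enorm,
      ← ofReal_integral_norm_eq_lintegral_enorm hf]
    exact eLpNormEssSup_le_of_ae_bound (.of_forall (norm_fourier_le f))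
  eLpNorm_two_le f hf := by
    obtain h_top | h_top := eq_or_ne (eLpNorm f 2) ∞
    · exact h_top ▸ le_top
    · exact (eLpNorm_fourier_two hf ⟨hf.1, h_top.lt_top⟩).le

theorem exists_eLpNorm_fourier_le {r q : ℝ≥0∞} [r.HolderConjugate q] (hr : 2 ≤ r) :
    ∃ C : ℝ, 0 < C ∧ ∀ f : E → F, eLpNorm (𝓕 f) r ≤ ENNReal.ofReal C * eLpNorm f q := by
  obtain ⟨C, hC, bound⟩ :=
    (isEndpointContraction_fourier (E := E) (F := F)).exists_eLpNorm_le (q := q) hr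
  refine ⟨C, hC, fun f ↦ ?_⟩
  by_cases hf : Integrable f
  · exact bound f hf
  · have undefined : 𝓕 f = 0 := funext fun ξ ↦
      integral_undef ((Real.fourierIntegral_convergent_iff ξ).not.2 hf)
    simp [undefined]

end Fourier

section Dispersive

open scoped FourierTransform

variable {E : Type*} [NormedAddCommGroup E]

/-- The function `f` multiplied by the quadratic phase `e^{i|y|²/(4τ)}`. Up to normalization and
scaling, the propagator at time `τ` is the Fourier transform of `chirp τ f`. -/
def chirp (τ : ℝ) (f : E → ℂ) : E → ℂ :=
  fun y ↦ Complex.exp ((‖y‖ ^ 2 / (4 * τ) : ℝ) * Complex.I) * f y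

theorem enorm_chirp (τ : ℝ) (f : E → ℂ) (y : E) : ‖chirp τ f y‖ₑ = ‖f y‖ₑ := by
  rw [chirp, enorm_mul, ← ofReal_norm, Complex.norm_exp_ofReal_mul_I, ENNReal.ofReal_one, one_mul]

variable [InnerProductSpace ℝ E] [FiniteDimensional ℝ E] [MeasurableSpace E] [BorelSpace E]

theorem integral_exp_norm_sub_sq_mul {τ : ℝ} (hτ : τ ≠ 0) (f : E → ℂ) (x : E) :
    ∫ y, Complex.exp (Complex.I * ((‖x - y‖ ^ 2 : ℝ) : ℂ) / (4 * (τ : ℂ))) * f y =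
      Complex.exp ((‖x‖ ^ 2 / (4 * τ) : ℝ) * Complex.I) * 𝓕 (chirp τ f) ((4 * π * τ)⁻¹ • x) := by
  rw [Real.fourier_eq', ← integral_const_mul]
  congr 1 with y
  rw [chirp, smul_eq_mul, ← mul_assoc, ← mul_assoc, ← Complex.exp_add, ← Complex.exp_add]
  congr 2
  rw [inner_smul_right, norm_sub_sq_real, real_inner_comm]
  push_cast
  have : (τ : ℂ) ≠ 0 := mod_cast hτ
  have : (π : ℂ) ≠ 0 := mod_cast Real.pi_ne_zero
  field

theorem enorm_schrod (d : ℕ) {τ : ℝ} (hτ : τ ≠ 0) (f : E → ℂ) (x : E) :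
    ‖schrod d τ f x‖ₑ =
      ENNReal.ofReal (|4 * π * τ| ^ (-(d / 2) : ℝ)) * ‖𝓕 (chirp τ f) ((4 * π * τ)⁻¹ • x)‖ₑ := by
  have amplitude : ‖(4 * (π : ℂ) * Complex.I * (τ : ℂ)) ^ (-(d : ℂ) / 2)‖ₑ =
      ENNReal.ofReal (|4 * π * τ| ^ (-(d / 2) : ℝ)) := by
    rw [show -(d : ℂ) / 2 = ((-(d / 2) : ℝ) : ℂ) by push_cast; ring, ← ofReal_norm,
      Complex.norm_cpow_real]
    simp [abs_mul]
  rw [schrod, if_neg hτ, integral_exp_norm_sub_sq_mul hτ, enorm_mul, enorm_mul, amplitude,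
    ← ofReal_norm (Complex.exp _), Complex.norm_exp_ofReal_mul_I, ENNReal.ofReal_one, one_mul]

theorem eLpNorm_fun_comp_smul {G : Type*} [NormedAddCommGroup G] (g : E → G) (p : ℝ≥0∞) {c : ℝ}
    (hc : c ≠ 0) :
    eLpNorm (fun x ↦ g (c • x)) p =
      ENNReal.ofReal (|c| ^ (-(Module.finrank ℝ E * p⁻¹.toReal))) * eLpNorm g p := by
  have scale : ENNReal.ofReal |(c ^ Module.finrank ℝ E)⁻¹| ≠ 0 := by simp [hc]
  have map_eq := (measurableEmbedding_const_smul₀ hc).eLpNorm_map_measure (μ := volume) (g := g)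
    (p := p)
  rw [Measure.map_addHaar_smul _ hc, eLpNorm_smul_measure_of_ne_zero scale] at map_eq
  rw [← Function.comp_def g, ← map_eq, smul_eq_mul, abs_inv, abs_pow,
    ENNReal.ofReal_rpow_of_pos (by positivity), ← Real.rpow_natCast, Real.rpow_neg (abs_nonneg c),
    Real.rpow_mul (abs_nonneg c), Real.inv_rpow (by positivity)]
  simp

theorem exists_eLpNorm_schrod_le {r q : ℝ≥0∞} [r.HolderConjugate q] (hr : 2 ≤ r) :
    ∃ C : ℝ, 0 < C ∧ ∀ τ : ℝ, τ ≠ 0 → ∀ f : E → ℂ,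
      eLpNorm (schrod (Module.finrank ℝ E) τ f) r ≤
        ENNReal.ofReal (C * |τ| ^ (-(Module.finrank ℝ E * (1 / 2 - r⁻¹.toReal)))) *
          eLpNorm f q := by
  obtain ⟨C, hC, hausdorff_young⟩ := exists_eLpNorm_fourier_le (E := E) (F := ℂ) (q := q) hr
  generalize hd : Module.finrank ℝ E = d
  refine ⟨(4 * π) ^ (-(d * (1 / 2 - r⁻¹.toReal))) * C, by positivity, fun τ hτ f ↦ ?_⟩
  have hτ' : 4 * π * τ ≠ 0 := by positivity
  calc eLpNorm (schrod d τ f) r volume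
      = eLpNorm (|4 * π * τ| ^ (-(d / 2) : ℝ) • fun x ↦ 𝓕 (chirp τ f) ((4 * π * τ)⁻¹ • x)) r
          volume :=
        eLpNorm_congr_enorm_ae (.of_forall fun x ↦ by
          rw [enorm_schrod d hτ, Pi.smul_apply, enorm_smul, Real.enorm_of_nonneg (by positivity)])
    _ = ENNReal.ofReal (|4 * π * τ| ^ (-(d / 2) : ℝ)) *
          (ENNReal.ofReal (|4 * π * τ| ^ (d * r⁻¹.toReal)) * eLpNorm (𝓕 (chirp τ f)) r) := by
        rw [eLpNorm_const_smul, Real.enorm_of_nonneg (by positivity),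
          eLpNorm_fun_comp_smul _ _ (inv_ne_zero hτ'), hd, abs_inv, Real.inv_rpow (abs_nonneg _),
          ← Real.rpow_neg (abs_nonneg _), neg_neg]
    _ = ENNReal.ofReal (|4 * π * τ| ^ (-(d * (1 / 2 - r⁻¹.toReal)))) *
          eLpNorm (𝓕 (chirp τ f)) r := by
        rw [← mul_assoc, ← ENNReal.ofReal_mul (by positivity),
          ← Real.rpow_add (abs_pos.2 hτ')]
        ring_nf
    _ ≤ ENNReal.ofReal (|4 * π * τ| ^ (-(d * (1 / 2 - r⁻¹.toReal)))) *
          (ENNReal.ofReal C * eLpNorm (chirp τ f) q) := by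
        gcongr
        exact hausdorff_young _
    _ = _ := by
        rw [eLpNorm_congr_enorm_ae (.of_forall (enorm_chirp τ f)), ← mul_assoc,
          ← ENNReal.ofReal_mul (by positivity), abs_mul, abs_of_pos (by positivity : 0 < 4 * π),
          Real.mul_rpow (by positivity) (abs_nonneg τ)]
        ring_nf

end Dispersive

section Minkowski

variable {α β : Type*} [MeasurableSpace α] [MeasurableSpace β] {μ : Measure α} {ν : Measure β}

theorem rpow_mul_rpow_one_sub_le (w : ℝ≥0∞) {r : ℝ} (hr : 1 ≤ r) : w ^ r * w ^ (1 - r) ≤ w := by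
  obtain rfl | hr := hr.eq_or_lt
  · simp
  obtain rfl | hw := eq_or_ne w 0
  · simp [one_pos.trans hr]
  obtain rfl | hw' := eq_or_ne w ∞
  · exact le_top
  · rw [← ENNReal.rpow_add _ _ hw hw', add_sub_cancel, ENNReal.rpow_one]

-- Integrating this weighted Hölder inequality in a further variable yields Minkowski's inequality
-- without duality.
theorem rpow_lintegral_le_lintegral_mul_rpow {g w : β → ℝ≥0∞} (hg : AEMeasurable g ν)
    (hw : AEMeasurable w ν) {r : ℝ} (hr : 1 ≤ r) (h_zero : ∀ᵐ s ∂ν, w s = 0 → g s = 0)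
    (h_top : ∫⁻ s, w s ∂ν ≠ ∞) :
    (∫⁻ s, g s ∂ν) ^ r ≤ (∫⁻ s, g s ^ r * w s ^ (1 - r) ∂ν) * (∫⁻ s, w s ∂ν) ^ (r - 1) := by
  have hr_pos : 0 < r := one_pos.trans_le hr
  have factor : ∀ᵐ s ∂ν, g s = (g s ^ r * w s ^ (1 - r)) ^ (1 / r) * w s ^ ((r - 1) / r) := by
    filter_upwards [h_zero, ae_lt_top' hw h_top] with s hs_zero hs_top
    obtain hs | hs := eq_or_ne (w s) 0
    · simp [hs_zero hs, hr_pos]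
    · rw [ENNReal.mul_rpow_of_nonneg _ _ (by positivity), ← ENNReal.rpow_mul, ← ENNReal.rpow_mul,
        mul_one_div_cancel hr_pos.ne', ENNReal.rpow_one, mul_assoc,
        ← ENNReal.rpow_add _ _ hs hs_top.ne,
        show (1 - r) * (1 / r) + (r - 1) / r = 0 by ring, ENNReal.rpow_zero, mul_one]
  calc (∫⁻ s, g s ∂ν) ^ r
      = (∫⁻ s, (g s ^ r * w s ^ (1 - r)) ^ (1 / r) * w s ^ ((r - 1) / r) ∂ν) ^ r := by
        rw [lintegral_congr_ae factor]
    _ ≤ ((∫⁻ s, g s ^ r * w s ^ (1 - r) ∂ν) ^ (1 / r) * (∫⁻ s, w s ∂ν) ^ ((r - 1) / r)) ^ r := by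
        gcongr
        exact ENNReal.lintegral_mul_norm_pow_le (by fun_prop) hw (by positivity)
          (div_nonneg (by linarith) hr_pos.le) (by field)
    _ = _ := by
        rw [ENNReal.mul_rpow_of_nonneg _ _ hr_pos.le, ← ENNReal.rpow_mul, ← ENNReal.rpow_mul,
          one_div_mul_cancel hr_pos.ne', ENNReal.rpow_one, div_mul_cancel₀ _ hr_pos.ne']

variable [SFinite μ] [SFinite ν] {g : β → α → ℝ≥0∞} {w : β → ℝ≥0∞}

theorem lintegral_rpow_lintegral_le (hg : Measurable (Function.uncurry g)) (hw : Measurable w)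
    {r : ℝ} (hr : 1 ≤ r) (h_bound : ∀ᵐ s ∂ν, ∫⁻ x, g s x ^ r ∂μ ≤ w s ^ r) :
    ∫⁻ x, (∫⁻ s, g s x ∂ν) ^ r ∂μ ≤ (∫⁻ s, w s ∂ν) ^ r := by
  have hr_pos : 0 < r := one_pos.trans_le hr
  obtain h_top | h_top := eq_or_ne (∫⁻ s, w s ∂ν) ∞
  · simp [h_top, hr_pos]
  have h_zero : ∀ᵐ x ∂μ, ∀ᵐ s ∂ν, w s = 0 → g s x = 0 := by
    have measurable_set : MeasurableSet {z : α × β | w z.2 = 0 → g z.2 z.1 = 0} :=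
      (hw.comp measurable_snd (measurableSet_singleton 0)).imp
        (hg.comp measurable_swap (measurableSet_singleton 0))
    rw [Measure.ae_ae_comm measurable_set]
    filter_upwards [h_bound] with s hs
    obtain hws | hws := eq_or_ne (w s) 0
    · rw [hws, ENNReal.zero_rpow_of_pos hr_pos, nonpos_iff_eq_zero,
        lintegral_eq_zero_iff (by fun_prop)] at hs
      exact hs.mono fun x hx _ ↦ (ENNReal.rpow_eq_zero_iff_of_pos hr_pos).1 hx
    · simp [hws]
  calc ∫⁻ x, (∫⁻ s, g s x ∂ν) ^ r ∂μ
      ≤ ∫⁻ x, (∫⁻ s, g s x ^ r * w s ^ (1 - r) ∂ν) * (∫⁻ s, w s ∂ν) ^ (r - 1) ∂μ :=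
        lintegral_mono_ae <| h_zero.mono fun x hx ↦ rpow_lintegral_le_lintegral_mul_rpow
          hg.of_uncurry_right.aemeasurable hw.aemeasurable hr hx h_top
    _ = (∫⁻ s, ∫⁻ x, g s x ^ r * w s ^ (1 - r) ∂μ ∂ν) * (∫⁻ s, w s ∂ν) ^ (r - 1) := by
        rw [lintegral_mul_const' _ _ (by simp [h_top, hr]), lintegral_lintegral_swap (by fun_prop)]
    _ ≤ (∫⁻ s, w s ∂ν) * (∫⁻ s, w s ∂ν) ^ (r - 1) := by
        gcongr ?_ * _
        refine lintegral_mono_ae (h_bound.mono fun s hs ↦ ?_)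
        rw [lintegral_mul_const _ (by fun_prop)]
        exact (mul_le_mul_left hs _).trans (rpow_mul_rpow_one_sub_le _ hr)
    _ = (∫⁻ s, w s ∂ν) ^ r := by
        nth_rw 1 [← ENNReal.rpow_one (∫⁻ s, w s ∂ν)]
        rw [← ENNReal.rpow_add_of_nonneg _ _ zero_le_one (by linarith), add_sub_cancel]

theorem eLpNorm_top_lintegral_le (hg : Measurable (Function.uncurry g)) (hw : Measurable w)
    (h_bound : ∀ᵐ s ∂ν, eLpNorm (g s) ∞ μ ≤ w s) :
    eLpNorm (fun x ↦ ∫⁻ s, g s x ∂ν) ∞ μ ≤ ∫⁻ s, w s ∂ν := by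
  have pointwise : ∀ᵐ x ∂μ, ∀ᵐ s ∂ν, g s x ≤ w s := by
    have measurable_set : MeasurableSet {z : α × β | g z.2 z.1 ≤ w z.2} :=
      measurableSet_le (hg.comp measurable_swap) (hw.comp measurable_snd)
    rw [Measure.ae_ae_comm measurable_set]
    filter_upwards [h_bound] with s hs
    exact (enorm_ae_le_eLpNormEssSup (g s) μ).mono fun x hx ↦ hx.trans hs
  rw [eLpNorm_exponent_top]
  exact eLpNormEssSup_le_of_ae_enorm_bound (pointwise.mono fun x hx ↦ lintegral_mono_ae hx)

theorem eLpNorm_lintegral_le (hg : Measurable (Function.uncurry g)) (hw : Measurable w)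
    {r : ℝ≥0∞} (hr : 1 ≤ r) (h_bound : ∀ᵐ s ∂ν, eLpNorm (g s) r μ ≤ w s) :
    eLpNorm (fun x ↦ ∫⁻ s, g s x ∂ν) r μ ≤ ∫⁻ s, w s ∂ν := by
  obtain rfl | hr_top := eq_or_ne r ∞
  · exact eLpNorm_top_lintegral_le hg hw h_bound
  have hr_zero : r ≠ 0 := (one_pos.trans_le hr).ne'
  have hr' : 1 ≤ r.toReal := by simpa using ENNReal.toReal_mono hr_top hr
  have hr_pos : 0 < r.toReal := one_pos.trans_le hr'
  simp only [eLpNorm_eq_lintegral_rpow_enorm_toReal hr_zero hr_top, one_div,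
    ENNReal.rpow_inv_le_iff hr_pos, enorm_eq_self] at h_bound ⊢
  exact lintegral_rpow_lintegral_le hg hw hr' h_bound

theorem eLpNorm_integral_le_lintegral {F : Type*} [NormedAddCommGroup F] [NormedSpace ℝ F]
    [MeasurableSpace F] [OpensMeasurableSpace F] {f : β → α → F}
    (hf : Measurable (Function.uncurry f)) (hw : Measurable w) {r : ℝ≥0∞} (hr : 1 ≤ r)
    (h_bound : ∀ᵐ s ∂ν, eLpNorm (f s) r μ ≤ w s) :
    eLpNorm (fun x ↦ ∫ s, f s x ∂ν) r μ ≤ ∫⁻ s, w s ∂ν := calc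
  _ ≤ eLpNorm (fun x ↦ ∫⁻ s, ‖f s x‖ₑ ∂ν) r μ :=
    eLpNorm_mono_enorm fun _ ↦ enorm_integral_le_lintegral_enorm _
  _ ≤ ∫⁻ s, w s ∂ν := eLpNorm_lintegral_le hf.enorm hw hr
    (h_bound.mono fun s hs ↦ (eLpNorm_enorm (f s)).trans_le hs)

end Minkowski

section MixedNorm

variable {α : Type*}

theorem enorm_nonlin {a : ℝ} (ha : -1 < a) (f : α → ℂ) (x : α) :
    ‖nonlin a f x‖ₑ = ‖f x‖ₑ ^ (a + 1) := by
  rw [← ofReal_norm, nonlin, norm_mul, Complex.norm_real, Real.norm_of_nonneg (by positivity),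
    ← Real.rpow_add_one' (norm_nonneg _) (by linarith), ← ofReal_norm,
    ENNReal.ofReal_rpow_of_nonneg (norm_nonneg _) (by linarith)]

variable [MeasurableSpace α] {μ : Measure α}

theorem mixedNorm_eq_eLpNorm (I : Set ℝ) {p : ℝ≥0∞} (hp : p ≠ 0) (q : ℝ≥0∞) (u : ℝ → α → ℂ) :
    mixedNorm μ I p q u = eLpNorm (fun s ↦ eLpNorm (u s) q μ) p (volume.restrict I) := by
  obtain rfl | hp_top := eq_or_ne p ∞
  · simp [mixedNorm, eLpNormEssSup_eq_essSup_enorm]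
  · simp [mixedNorm, hp_top, eLpNorm_eq_lintegral_rpow_enorm_toReal hp hp_top]

theorem measurable_eLpNorm_left [SFinite μ] {u : ℝ → α → ℂ} (hu : Measurable (Function.uncurry u))
    {q : ℝ≥0∞} (hq : q ≠ ∞) : Measurable fun s ↦ eLpNorm (u s) q μ := by
  obtain rfl | hq_zero := eq_or_ne q 0
  · simp
  simp_rw [eLpNorm_eq_lintegral_rpow_enorm_toReal hq_zero hq]
  exact (hu.enorm.pow_const q.toReal).lintegral_prod_right'.pow_const _

theorem setLIntegral_eLpNorm_le_mixedNorm [SFinite μ] (I : Set ℝ) {p q : ℝ≥0∞} (hp : 1 ≤ p)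
    (hq : q ≠ ∞) {u : ℝ → α → ℂ} (hu : Measurable (Function.uncurry u)) :
    ∫⁻ s in I, eLpNorm (u s) q μ ≤ mixedNorm μ I p q u * volume I ^ (1 - p⁻¹.toReal) := by
  have holder := eLpNorm_le_eLpNorm_mul_rpow_measure_univ (μ := volume.restrict I) hp
    (measurable_eLpNorm_left (μ := μ) hu hq).aestronglyMeasurable
  rw [← mixedNorm_eq_eLpNorm I (one_pos.trans_le hp).ne', eLpNorm_one_eq_lintegral_enorm] at holder
  simpa using holder

theorem measurable_uncurry_nonlin (a : ℝ) {u : ℝ → α → ℂ} (hu : Measurable (Function.uncurry u)) :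
    Measurable (Function.uncurry fun s ↦ nonlin a (u s)) :=
  (Complex.measurable_ofReal.comp (hu.norm.pow_const a)).mul hu

theorem eLpNorm_nonlin {a : ℝ} (ha : -1 < a) (q : ℝ≥0∞) (f : α → ℂ) :
    eLpNorm (nonlin a f) q μ = eLpNorm f (q * ENNReal.ofReal (a + 1)) μ ^ (a + 1) := by
  rw [← eLpNorm_enorm_rpow f (by linarith)]
  exact eLpNorm_congr_enorm_ae (.of_forall fun x ↦ enorm_nonlin ha f x)

theorem mixedNorm_nonlin (I : Set ℝ) {p : ℝ≥0∞} (hp : p ≠ 0) (q : ℝ≥0∞) {a : ℝ} (ha : -1 < a)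
    (u : ℝ → α → ℂ) :
    mixedNorm μ I p q (fun s ↦ nonlin a (u s)) =
      mixedNorm μ I (p * ENNReal.ofReal (a + 1)) (q * ENNReal.ofReal (a + 1)) u ^ (a + 1) := by
  have ha' : 0 < a + 1 := by linarith
  rw [mixedNorm_eq_eLpNorm I hp, mixedNorm_eq_eLpNorm I (by simp [hp, ha']),
    ← eLpNorm_enorm_rpow _ ha']
  simp_rw [eLpNorm_nonlin ha, enorm_eq_self]

end MixedNorm

section Duhamel

variable {E : Type*} [NormedAddCommGroup E] [InnerProductSpace ℝ E] [FiniteDimensional ℝ E]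
  [MeasurableSpace E] [BorelSpace E]

theorem measurable_uncurry_schrod (d : ℕ) (t : ℝ) {f : ℝ → E → ℂ}
    (hf : Measurable (Function.uncurry f)) :
    Measurable (Function.uncurry fun s ↦ schrod d (t - s) (f s)) := by
  have kernel : Measurable fun z : (ℝ × E) × E ↦
      Complex.exp (Complex.I * ((‖z.1.2 - z.2‖ ^ 2 : ℝ) : ℂ) / (4 * ((t - z.1.1 : ℝ) : ℂ))) *
        f z.1.1 z.2 :=
    .mul (by fun_prop) (hf.comp (measurable_fst.fst.prodMk measurable_snd))
  have integral : Measurable fun z : ℝ × E ↦ ∫ y,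
      Complex.exp (Complex.I * ((‖z.2 - y‖ ^ 2 : ℝ) : ℂ) / (4 * ((t - z.1 : ℝ) : ℂ))) * f z.1 y :=
    kernel.stronglyMeasurable.integral_prod_right'.measurable
  have amplitude : Measurable fun z : ℝ × E ↦
      (4 * (π : ℂ) * Complex.I * ((t - z.1 : ℝ) : ℂ)) ^ (-(d : ℂ) / 2) := by
    fun_prop
  have diagonal : MeasurableSet {z : ℝ × E | t - z.1 = 0} :=
    measurable_fst.const_sub t (measurableSet_singleton 0)
  have : (Function.uncurry fun s ↦ schrod d (t - s) (f s)) = fun z ↦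
      if t - z.1 = 0 then Function.uncurry f z else
        (4 * (π : ℂ) * Complex.I * ((t - z.1 : ℝ) : ℂ)) ^ (-(d : ℂ) / 2) * ∫ y,
          Complex.exp (Complex.I * ((‖z.2 - y‖ ^ 2 : ℝ) : ℂ) / (4 * ((t - z.1 : ℝ) : ℂ))) *
            f z.1 y := by
    ext z
    simp only [Function.uncurry, schrod]
    split_ifs <;> rfl
  rw [this]
  exact Measurable.ite diagonal hf (amplitude.mul integral)

theorem exists_eLpNorm_integral_schrod_le {r q : ℝ≥0∞} [r.HolderConjugate q] (hr : 2 ≤ r) :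
    ∃ C : ℝ, 0 < C ∧ ∀ (ν : Measure ℝ) [SFinite ν] (t τ : ℝ), 0 < τ → (∀ᵐ s ∂ν, τ ≤ |t - s|) →
      ∀ f : ℝ → E → ℂ, Measurable (Function.uncurry f) →
        eLpNorm (fun x ↦ ∫ s, schrod (Module.finrank ℝ E) (t - s) (f s) x ∂ν) r ≤
          ENNReal.ofReal (C * τ ^ (-(Module.finrank ℝ E * (1 / 2 - r⁻¹.toReal)))) *
            ∫⁻ s, eLpNorm (f s) q ∂ν := by
  obtain ⟨C, hC, dispersive⟩ := exists_eLpNorm_schrod_le (E := E) (q := q) hr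
  have hr_one : 1 < r := ENNReal.one_lt_two.trans_le hr
  have hq : q ≠ ∞ := ((ENNReal.HolderConjugate.lt_top_iff_one_lt q r).2 hr_one).ne
  have inv_le_half : r⁻¹.toReal ≤ 1 / 2 := by
    simpa using ENNReal.toReal_mono (by simp) (ENNReal.inv_le_inv.2 hr)
  refine ⟨C, hC, fun ν _ t τ hτ h_far f hf ↦ ?_⟩
  have hw := measurable_eLpNorm_left (μ := volume) hf hq
  rw [← lintegral_const_mul _ hw]
  refine eLpNorm_integral_le_lintegral (measurable_uncurry_schrod _ t hf) (hw.const_mul _)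
    hr_one.le (h_far.mono fun s hs ↦ ?_)
  have hts : t - s ≠ 0 := abs_pos.1 (hτ.trans_le hs)
  have exponent_nonpos : -(Module.finrank ℝ E * (1 / 2 - r⁻¹.toReal)) ≤ 0 :=
    neg_nonpos.2 (mul_nonneg (Nat.cast_nonneg _) (sub_nonneg.2 inv_le_half))
  refine (dispersive _ hts _).trans ?_
  gcongr ENNReal.ofReal (C * ?_) * _
  exact Real.rpow_le_rpow_of_nonpos hτ hs exponent_nonpos

theorem exists_eLpNorm_integral_schrod_nonlin_le {r q p : ℝ≥0∞} [r.HolderConjugate q] (hr : 2 ≤ r)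
    (hp : 1 ≤ p) {a : ℝ} (ha : -1 < a) :
    ∃ C : ℝ, 0 < C ∧ ∀ t : ℝ, 0 < t → ∀ A : ℝ, 0 ≤ A → ∀ I : Set ℝ, I ⊆ Icc 0 (min (t / 2) A) →
      ∀ u : ℝ → E → ℂ, Measurable (Function.uncurry u) →
        eLpNorm (fun x ↦ ∫ s in I, schrod (Module.finrank ℝ E) (t - s) (nonlin a (u s)) x) r ≤
          ENNReal.ofReal (C * t ^ (-(Module.finrank ℝ E * (1 / 2 - r⁻¹.toReal))) *
              A ^ (1 - p⁻¹.toReal)) *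
            mixedNorm volume I (p * ENNReal.ofReal (a + 1)) (q * ENNReal.ofReal (a + 1)) u ^
              (a + 1) := by
  obtain ⟨C, hC, duhamel⟩ := exists_eLpNorm_integral_schrod_le (E := E) (q := q) hr
  set e := Module.finrank ℝ E * (1 / 2 - r⁻¹.toReal)
  have hq : q ≠ ∞ :=
    ((ENNReal.HolderConjugate.lt_top_iff_one_lt q r).2 (ENNReal.one_lt_two.trans_le hr)).ne
  have hp_inv : 0 ≤ 1 - p⁻¹.toReal :=
    sub_nonneg.2 (ENNReal.toReal_mono ENNReal.one_ne_top (ENNReal.inv_le_one.2 hp))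
  refine ⟨C * (1 / 2) ^ (-e), by positivity, fun t ht A hA I hI u hu ↦ ?_⟩
  have hv := measurable_uncurry_nonlin a hu
  have h_far : ∀ᵐ s ∂volume.restrict I, t / 2 ≤ |t - s| :=
    ae_restrict_of_ae_restrict_of_subset hI <| (ae_restrict_mem measurableSet_Icc).mono fun s hs ↦
      (by linarith [hs.2.trans (min_le_left _ _)] : t / 2 ≤ t - s).trans (le_abs_self _)
  have h_volume : volume I ≤ ENNReal.ofReal A :=
    (measure_mono (hI.trans (Icc_subset_Icc_right (min_le_right _ _)))).trans_eq (by simp)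
  calc _ ≤ ENNReal.ofReal (C * (t / 2) ^ (-e)) *
          ∫⁻ s in I, eLpNorm (nonlin a (u s)) q volume :=
        duhamel _ t (t / 2) (by positivity) h_far _ hv
    _ ≤ ENNReal.ofReal (C * (t / 2) ^ (-e)) *
          (mixedNorm volume I p q (fun s ↦ nonlin a (u s)) *
            ENNReal.ofReal A ^ (1 - p⁻¹.toReal)) := by
        gcongr
        exact (setLIntegral_eLpNorm_le_mixedNorm I hp hq hv).trans (by gcongr)
    _ = _ := by
        rw [mixedNorm_nonlin I (one_pos.trans_le hp).ne' q ha, mul_comm (_ ^ (a + 1)), ← mul_assoc,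
          ENNReal.ofReal_rpow_of_nonneg hA hp_inv, ← ENNReal.ofReal_mul (by positivity),
          div_eq_mul_one_div t, Real.mul_rpow ht.le (by positivity)]
        ring_nf

end Duhamel

theorem early_time_piece_3d_general {r : ℝ} (hr : 2 ≤ r) :
    ∃ C : ℝ, 0 < C ∧
      ∀ t : ℝ, 0 < t → ∀ A : ℝ, 0 ≤ A →
        ∀ I : Set ℝ, I ⊆ Icc 0 (min (t / 2) A) →
          ∀ u : ℝ → EuclideanSpace ℝ (Fin 3) → ℂ, Measurable (Function.uncurry u) →
            eLpNorm (fun x ↦ ∫ s in I, schrod 3 (t - s) (nonlin (4 / 3) (u s)) x)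
                (ENNReal.ofReal r) volume ≤
              ENNReal.ofReal (C * t ^ (-(3 * (1 / 2 - 1 / r))) * A ^ (3 * (r - 2) / (4 * r))) *
                mixedNorm volume I (ENNReal.ofReal (28 * r / (3 * (r + 6))))
                    (ENNReal.ofReal (7 * r / (3 * (r - 1)))) u ^ ((7 : ℝ) / 3) := by
  have hr_conj := Real.HolderConjugate.conjExponent (by linarith : 1 < r)
  have := hr_conj.ennrealOfReal
  have hr_two : 2 ≤ ENNReal.ofReal r := by simpa using ENNReal.ofReal_le_ofReal hr
  have hp_one : 1 ≤ ENNReal.ofReal (4 * r / (r + 6)) := by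
    rw [ENNReal.one_le_ofReal, le_div_iff₀ (by linarith)]
    linarith
  obtain ⟨C, hC, bound⟩ := exists_eLpNorm_integral_schrod_nonlin_le (E := EuclideanSpace ℝ (Fin 3))
    (q := ENNReal.ofReal r.conjExponent) hr_two hp_one (a := 4 / 3) (by norm_num)
  have inv_r : (ENNReal.ofReal r)⁻¹.toReal = 1 / r := by
    rw [ENNReal.toReal_inv, ENNReal.toReal_ofReal (by positivity), one_div]
  have one_sub_inv_p : 1 - (ENNReal.ofReal (4 * r / (r + 6)))⁻¹.toReal =
      3 * (r - 2) / (4 * r) := by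
    rw [ENNReal.toReal_inv, ENNReal.toReal_ofReal (by positivity)]
    field
  have p_mul : 4 * r / (r + 6) * (7 / 3) = 28 * r / (3 * (r + 6)) := by field
  have q_mul : r.conjExponent * (7 / 3) = 7 * r / (3 * (r - 1)) := by
    rw [Real.conjExponent]
    field
  rw [inv_r, one_sub_inv_p, finrank_euclideanSpace_fin, Nat.cast_ofNat,
    ← ENNReal.ofReal_mul (by positivity), ← ENNReal.ofReal_mul hr_conj.symm.nonneg,
    show (4 / 3 + 1 : ℝ) = 7 / 3 by norm_num, p_mul, q_mul] at bound
  exact ⟨C, hC, bound⟩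

/-- **Three-dimensional early-time piece estimate.**  Fix `2 < r < 6`.  For any `t > 0`,
`A > 0`, any measurable interval `I ⊆ [0, min (t/2) A]`, and any measurable `u` on `I × ℝ³`,
`‖∫_I e^{i(t-s)Δ}(|u|^{4/3}u)(s) ds‖_{L^r_x} ≤ C t^{-3(1/2-1/r)} A^{3(r-2)/(4r)}
  ‖u‖^{7/3}_{L^{28r/(3(r+6))}_s L^{7r/(3(r-1))}_x(I×ℝ³)}`, with `C = C(r)`. -/
theorem early_time_piece_3d (r : ℝ) (hr : 2 < r) (hr6 : r < 6) :
    ∃ C : ℝ, 0 < C ∧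
      ∀ t : ℝ, 0 < t → ∀ A : ℝ, 0 < A →
        ∀ I : Set ℝ, MeasurableSet I → I.OrdConnected → I ⊆ Set.Icc 0 (min (t / 2) A) →
          ∀ u : ℝ → EuclideanSpace ℝ (Fin 3) → ℂ, Measurable (Function.uncurry u) →
            eLpNorm (fun x => ∫ s in I, schrod 3 (t - s) (nonlin (4 / 3) (u s)) x)
                (ENNReal.ofReal r) volume ≤
              ENNReal.ofReal (C * t ^ (-(3 * (1 / 2 - 1 / r))) * A ^ (3 * (r - 2) / (4 * r))) *
                mixedNorm volume I (ENNReal.ofReal (28 * r / (3 * (r + 6))))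
                    (ENNReal.ofReal (7 * r / (3 * (r - 1)))) u ^ ((7 : ℝ) / 3) := by
  obtain ⟨C, hC, bound⟩ := early_time_piece_3d_general hr.le
  exact ⟨C, hC, fun t ht A hA I _ _ hI u hu ↦ bound t ht A hA.le I hI u hu⟩
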